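/- Let R be a commutative ring and A a commutative R-algebra. The A-linear map Ω_{A/R} → Ω_{A[ε]/R[ε]} sending ω to ε • ι(ω) is injective, and its image equals the kernel of the map Ω_{A[ε]/R[ε]} → Ω_{A/R} on Kähler differentials induced by the projection π : A[ε] → A (setting ε = 0). In particular the kernel of the map induced by ε = 0 is isomorphic, as an A-module, to Ω_{A/R}. -/

import Mathlib

/-!
`A[ε]` is the base change of `A` along `R → R[ε]`, and Kähler differentials commute with base
change, so `Ω[A[ε]⁄R[ε]]` is the base change of `Ω[A⁄R]`. Since `R[ε]` is free over `R` on `1, ε`,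
this means `Ω[A[ε]⁄R[ε]] = ι Ω[A⁄R] ⊕ ε • ι Ω[A⁄R]`. Setting `ε = 0` is a retraction of `ι` which
kills the second summand.
-/

open scoped DualNumber TensorProduct
open TrivSqZeroExt

noncomputable section

variable (R A : Type*) [CommRing R] [CommRing A] [Algebra R A]

/-- The functorial `R`-algebra homomorphism `R[ε] →ₐ[R] A[ε]` sending `ε` to `ε`,
making `A[ε]` into an `R[ε]`-algebra. -/
def DualNumber.inclAlgHom : R[ε] →ₐ[R] A[ε] :=
  DualNumber.lift ⟨(Algebra.ofId R A[ε], ε),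
    DualNumber.eps_mul_eps, fun _ => Commute.all _ _⟩

/-- `A[ε]` as an `R[ε]`-algebra. -/
instance : Algebra R[ε] A[ε] := (DualNumber.inclAlgHom R A).toRingHom.toAlgebra

instance : IsScalarTower R R[ε] A[ε] := ⟨fun r x a => by
  show DualNumber.inclAlgHom R A (r • x) * a = r • (DualNumber.inclAlgHom R A x * a)
  rw [map_smul, smul_mul_assoc]⟩

instance : SMulCommClass R[ε] A A[ε] := ⟨fun x a b => by
  show DualNumber.inclAlgHom R A x * (a • b) = a • (DualNumber.inclAlgHom R A x * b)
  rw [mul_smul_comm]⟩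

/-- `ι : Ω[A⁄R] → Ω[A[ε]⁄R[ε]]`, the map on Kähler differentials induced by the
inclusion `A → A[ε]` (over `R → R[ε]`). -/
def iotaOmega : Ω[A⁄R] →ₗ[A] Ω[A[ε]⁄R[ε]] := KaehlerDifferential.map R R[ε] A A[ε]

/-- `A` as an `A[ε]`-algebra via the projection `π : A[ε] → A` setting `ε = 0`. -/
instance : Algebra A[ε] A := (TrivSqZeroExt.fstHom A A A).toRingHom.toAlgebra

/-- `R` as an `R[ε]`-algebra via the projection setting `ε = 0`. -/
instance : Algebra R[ε] R := (TrivSqZeroExt.fstHom R R R).toRingHom.toAlgebra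

/-- `A` as an `R[ε]`-algebra. -/
instance : Algebra R[ε] A :=
  ((algebraMap R A).comp (TrivSqZeroExt.fstHom R R R).toRingHom).toAlgebra

instance : @IsScalarTower R[ε] R A Algebra.toSMul Algebra.toSMul Algebra.toSMul :=
  IsScalarTower.of_algebraMap_eq fun _ => rfl

instance : @IsScalarTower R[ε] A[ε] A Algebra.toSMul Algebra.toSMul Algebra.toSMul :=
  IsScalarTower.of_algebraMap_eq fun x => by
    show algebraMap R A x.fst = ((DualNumber.inclAlgHom R A) x).fst
    simp [DualNumber.inclAlgHom, DualNumber.lift_apply_apply, Algebra.ofId_apply,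
      TrivSqZeroExt.algebraMap_eq_inl']

instance : SMulCommClass R A[ε] A := ⟨fun r x a => by
  show r • ((TrivSqZeroExt.fstHom A A A) x * a) = (TrivSqZeroExt.fstHom A A A) x * (r • a)
  rw [mul_smul_comm]⟩

/-- The map `Ω[A[ε]⁄R[ε]] → Ω[A⁄R]` on Kähler differentials induced by the projection
`π : A[ε] → A` setting `ε = 0`. -/
def projOmega : Ω[A[ε]⁄R[ε]] →ₗ[A[ε]] Ω[A⁄R] := KaehlerDifferential.map R[ε] R A[ε] A

section BaseChange

variable {S M N : Type*} [CommSemiring S] [AddCommMonoid M] [AddCommMonoid N] [Module S M]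
  [Module S N] [Module S[ε] N] [IsScalarTower S S[ε] N]

variable (S M) in
/-- The decomposition of `S[ε] ⊗[S] M` coming from the basis `1, ε` of `S[ε]`, sending `(m, m')` to
`1 ⊗ₜ m + ε ⊗ₜ m'`. -/
def prodEquivDualNumberTensor : (M × M) ≃ₗ[S] S[ε] ⊗[S] M :=
  LinearEquiv.ofLinearMap
    ((TensorProduct.mk S S[ε] M 1).coprod (TensorProduct.mk S S[ε] M ε))
    (LinearMap.prod (TensorProduct.lid S M ∘ₗ (TrivSqZeroExt.fstHom S S S).toLinearMap.rTensor M)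
      (TensorProduct.lid S M ∘ₗ (sndHom S S).rTensor M))
    (TensorProduct.ext' fun x m => by
      have hx : x.fst • 1 + x.snd • ε = x := by ext <;> simp
      simp [← TensorProduct.tmul_smul, ← TensorProduct.smul_tmul, ← TensorProduct.add_tmul, hx])
    (by ext <;> simp)

theorem isBaseChange_dualNumber_iff {f : M →ₗ[S] N} :
    IsBaseChange S[ε] f ↔ Function.Bijective (f.coprod ((ε : S[ε]) • f)) := by
  rw [IsBaseChange, IsTensorProduct, ← EquivLike.bijective_comp (prodEquivDualNumberTensor S M)]
  have h : TensorProduct.lift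
      (((Algebra.linearMap S[ε] (Module.End S[ε] (M →ₗ[S] N))).flip f).restrictScalars S) ∘ₗ
        prodEquivDualNumberTensor S M = f.coprod ((ε : S[ε]) • f) := by
    ext <;> simp [prodEquivDualNumberTensor]
  rw [← h]
  rfl

theorem injective_eps_smul_of_isBaseChange {f : M →ₗ[S] N} (hf : IsBaseChange S[ε] f) :
    Function.Injective fun m => (ε : S[ε]) • f m := by
  intro m m' h
  have h' : ((0, m) : M × M) = (0, m') :=
    (isBaseChange_dualNumber_iff.mp hf).injective (by simpa using h)
  exact congrArg Prod.snd h'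

theorem exact_eps_smul_of_isBaseChange {f : M →ₗ[S] N} (hf : IsBaseChange S[ε] f)
    {p : N →+ M} (hpf : Function.LeftInverse p f) (hpε : ∀ n, p ((ε : S[ε]) • n) = 0) :
    Function.Exact (fun m => (ε : S[ε]) • f m) p := by
  intro n
  constructor
  · intro hn
    obtain ⟨⟨m, m'⟩, rfl⟩ := (isBaseChange_dualNumber_iff.mp hf).surjective n
    have hm : m = 0 := by simpa [hpf m, hpε] using hn
    exact ⟨m', by simp [hm]⟩
  · rintro ⟨m, rfl⟩
    exact hpε _

end BaseChange

theorem leftInverse_projOmega_iotaOmega :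
    Function.LeftInverse (projOmega R A) (iotaOmega R A) := by
  have : IsScalarTower A A[ε] A := ⟨fun a x b => mul_assoc a x.fst b⟩
  have h : (projOmega R A).restrictScalars A ∘ₗ iotaOmega R A = LinearMap.id :=
    Derivation.liftKaehlerDifferential_unique _ _ <| Derivation.ext fun a => by
      simp [iotaOmega, projOmega, ← IsScalarTower.algebraMap_apply A A[ε] A]
  exact LinearMap.congr_fun h

section EpsSMul

/- Since `A` is an `R[ε]`-algebra, `A[ε]` also carries the componentwise `R[ε]`-action, in which `ε`
acts as `0`. Instance search would prefer it to the action coming from the algebra structure. -/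
local instance : SMul R[ε] A[ε] := Algebra.toSMul

local instance : Module R[ε] A[ε] := Algebra.toModule

theorem algebraMap_dualNumber_eps : algebraMap R[ε] A[ε] ε = ε :=
  DualNumber.lift_apply_eps _

theorem eps_smul_eq_eps_smul {N : Type*} [AddCommMonoid N] [Module R[ε] N] [Module A[ε] N]
    [IsScalarTower R[ε] A[ε] N] (n : N) : (ε : R[ε]) • n = (ε : A[ε]) • n := by
  rw [← algebraMap_dualNumber_eps R A, algebraMap_smul]

instance isPushout_dualNumber : Algebra.IsPushout R R[ε] A A[ε] where
  out := by
    rw [isBaseChange_dualNumber_iff]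
    refine Function.bijective_iff_has_inverse.mpr
      ⟨fun x => (x.fst, x.snd), fun m => ?_, fun x => ?_⟩
    all_goals ext <;> simp [eps_smul_eq_eps_smul R A, TrivSqZeroExt.algebraMap_eq_inl]

theorem isBaseChange_iotaOmega : IsBaseChange R[ε] ((iotaOmega R A).restrictScalars R) :=
  KaehlerDifferential.isBaseChange R R[ε] A A[ε]

theorem projOmega_eps_smul (w : Ω[A[ε]⁄R[ε]]) : projOmega R A ((ε : R[ε]) • w) = 0 := by
  have hε : algebraMap A[ε] A ε = 0 := DualNumber.fst_eps
  rw [eps_smul_eq_eps_smul R A w, map_smul, ← algebraMap_smul A (ε : A[ε]) (projOmega R A w), hε,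
    zero_smul]

/-- The map `ω ↦ ε • ι ω`, as an `A`-linear map: the comparison map between `Ω[A⁄R]` and the kernel
of `projOmega R A`. -/
def epsIota : Ω[A⁄R] →ₗ[A] Ω[A[ε]⁄R[ε]] :=
  DistribSMul.toLinearMap A _ (ε : A[ε]) ∘ₗ iotaOmega R A

theorem coe_epsIota : ⇑(epsIota R A) = fun w => (ε : R[ε]) • iotaOmega R A w :=
  funext fun w => (eps_smul_eq_eps_smul R A (iotaOmega R A w)).symm

theorem epsIota_injective : Function.Injective (epsIota R A) := by
  rw [coe_epsIota]
  exact injective_eps_smul_of_isBaseChange (isBaseChange_iotaOmega R A)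

theorem exact_epsIota_projOmega : Function.Exact (epsIota R A) (projOmega R A) := by
  rw [coe_epsIota]
  exact exact_eps_smul_of_isBaseChange (isBaseChange_iotaOmega R A)
    (p := (projOmega R A).toAddMonoidHom) (leftInverse_projOmega_iotaOmega R A)
    (projOmega_eps_smul R A)

end EpsSMul

/-- The `A`-linear map `Ω[A⁄R] → Ω[A[ε]⁄R[ε]]`, `ω ↦ ε • ι ω`, is injective, its image is
the kernel of the map induced by setting `ε = 0`; in particular that kernel is isomorphic
to `Ω[A⁄R]` as an `A`-module. -/
theorem eps_smul_iota_injective_range_eq_ker :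
    Function.Injective (fun w : Ω[A⁄R] => (ε : A[ε]) • iotaOmega R A w) ∧
    Set.range (fun w : Ω[A⁄R] => (ε : A[ε]) • iotaOmega R A w) =
      ↑(LinearMap.ker (projOmega R A)) ∧
    Nonempty (Ω[A⁄R] ≃ₗ[A]
      (Submodule.restrictScalars A (LinearMap.ker (projOmega R A)))) := by
  have hrange : LinearMap.range (epsIota R A) =
      (LinearMap.ker (projOmega R A)).restrictScalars A :=
    SetLike.ext fun w => (exact_epsIota_projOmega R A w).symm
  exact ⟨epsIota_injective R A, congrArg SetLike.coe hrange,
    ⟨LinearEquiv.ofInjective (epsIota R A) (epsIota_injective R A) ≪≫ₗ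
      LinearEquiv.ofEq _ _ hrange⟩⟩
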